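/- Let (Q,·,e) be a simple loop such that all squares lie in (at least) two of the three nuclei, i.e., there are two distinct indices i,j ∈ {ℓ,m,r} with x·x ∈ Nuc_i(Q) ∩ Nuc_j(Q) for all x ∈ Q. Then either Q is a group (the operation · is associative) or Q has exponent two (x·x = e for all x ∈ Q). -/

import Mathlib

/-- A loop `(Q, ·, e)`: a quasigroup with two-sided identity, presented with
explicit left division `ldiv a b = a \ b` and right division `rdiv b a = b / a`. -/
structure LoopStr (Q : Type*) where
  mul : Q → Q → Q
  e : Q
  ldiv : Q → Q → Q
  rdiv : Q → Q → Q
  one_mul : ∀ x, mul e x = x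
  mul_one : ∀ x, mul x e = x
  mul_ldiv : ∀ a b, mul a (ldiv a b) = b
  ldiv_mul : ∀ a b, ldiv a (mul a b) = b
  rdiv_mul : ∀ a b, mul (rdiv b a) a = b
  mul_rdiv : ∀ a b, rdiv (mul b a) a = b

namespace LoopStr

variable {Q : Type*} (S : LoopStr Q)

/-- The left inverse `x^ℓ = e / x`. -/
def linv (x : Q) : Q := S.rdiv S.e x

/-- The right inverse `x^r = x \ e`. -/
def rinv (x : Q) : Q := S.ldiv x S.e

/-- The left nucleus. -/
def lnuc : Set Q := {a | ∀ x y, S.mul (S.mul a x) y = S.mul a (S.mul x y)}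

/-- The middle nucleus. -/
def mnuc : Set Q := {a | ∀ x y, S.mul (S.mul x a) y = S.mul x (S.mul a y)}

/-- The right nucleus. -/
def rnuc : Set Q := {a | ∀ x y, S.mul (S.mul x y) a = S.mul x (S.mul y a)}

/-- The commutant `C(Q)`. -/
def commutant : Set Q := {a | ∀ x, S.mul a x = S.mul x a}

/-- The center `Z(Q) = C(Q) ∩ Nuc_ℓ ∩ Nuc_m ∩ Nuc_r`. -/
def center : Set Q := S.commutant ∩ S.lnuc ∩ S.mnuc ∩ S.rnuc

/-- The left translation `L_a` as a map. -/
def leftMul (a : Q) : Q → Q := fun x => S.mul a x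

/-- The left translation `L_a` as a permutation of `Q`. -/
def leftPerm (a : Q) : Equiv.Perm Q :=
  ⟨fun x => S.mul a x, fun x => S.ldiv a x, S.ldiv_mul a, S.mul_ldiv a⟩

/-- The right translation `R_a` as a permutation of `Q`. -/
def rightPerm (a : Q) : Equiv.Perm Q :=
  ⟨fun x => S.mul x a, fun x => S.rdiv x a, fun x => S.mul_rdiv a x, fun x => S.rdiv_mul a x⟩

/-- The multiplication group `Mlt(Q) = ⟨L_x, R_x : x ∈ Q⟩ ≤ Sym(Q)`. -/
def Mlt : Subgroup (Equiv.Perm Q) :=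
  Subgroup.closure (Set.range S.leftPerm ∪ Set.range S.rightPerm)

/-- `x^n = L_x^n(e)` for natural `n`. -/
def npow (a : Q) (n : ℕ) : Q := (S.leftPerm a ^ n) S.e

/-- `x^n = L_x^n(e)` for integer `n`. -/
def zpow (a : Q) (n : ℤ) : Q := (S.leftPerm a ^ n) S.e

/-- The order of an element: the least `n > 0` with `x^n = e` (or `0` if none exists). -/
noncomputable def lorder (a : Q) : ℕ := sInf {n : ℕ | 0 < n ∧ S.npow a n = S.e}

/-- A subloop: contains `e`, closed under multiplication and both divisions. -/
def IsSubloop (N : Set Q) : Prop :=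
  S.e ∈ N ∧ (∀ a ∈ N, ∀ b ∈ N, S.mul a b ∈ N) ∧
    (∀ a ∈ N, ∀ b ∈ N, S.ldiv a b ∈ N) ∧ (∀ a ∈ N, ∀ b ∈ N, S.rdiv a b ∈ N)

/-- A normal subloop: a subloop with `xN = Nx`, `(xN)y = x(Ny)`, `N(xy) = (Nx)y`
elementwise as sets. -/
def IsNormalSubloop (N : Set Q) : Prop :=
  S.IsSubloop N ∧
  (∀ x : Q, (fun a => S.mul x a) '' N = (fun a => S.mul a x) '' N) ∧
  (∀ x y : Q, (fun a => S.mul (S.mul x a) y) '' N = (fun a => S.mul x (S.mul a y)) '' N) ∧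
  (∀ x y : Q, (fun a => S.mul a (S.mul x y)) '' N = (fun a => S.mul (S.mul a x) y) '' N)

/-- A loop is simple if its only normal subloops are `{e}` and `Q`. -/
def IsSimple : Prop :=
  ∀ N : Set Q, S.IsNormalSubloop N → N = {S.e} ∨ N = Set.univ

lemma mul_rinv (x : Q) : S.mul x (S.rinv x) = S.e := S.mul_ldiv x S.e

lemma linv_mul (x : Q) : S.mul (S.linv x) x = S.e := S.rdiv_mul x S.e

lemma linv_rinv (x : Q) : S.linv (S.rinv x) = x := by
  have h := S.mul_rdiv (S.rinv x) x
  rw [S.mul_rinv] at h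
  exact h

lemma rinv_linv (x : Q) : S.rinv (S.linv x) = x := by
  have h := S.ldiv_mul (S.linv x) x
  rw [S.linv_mul] at h
  exact h

lemma rinv_e : S.rinv S.e = S.e := by
  have h := S.ldiv_mul S.e S.e
  rw [S.one_mul] at h
  exact h

lemma rdiv_e (x : Q) : S.rdiv x S.e = x := by
  have h := S.mul_rdiv S.e x
  rw [S.mul_one] at h
  exact h

/-- The principal right isostrophe `(Q, ∘)` of `(Q, ·)`, with `x ∘ y = x / (y^r)`,
right division `x // y = x·(y^r)` and left division `x \\ y = (y \ x)^ℓ`. -/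
def iso : LoopStr Q where
  mul x y := S.rdiv x (S.rinv y)
  e := S.e
  ldiv x y := S.linv (S.ldiv y x)
  rdiv x y := S.mul x (S.rinv y)
  one_mul x := S.linv_rinv x
  mul_one x := by
    show S.rdiv x (S.rinv S.e) = x
    rw [S.rinv_e, S.rdiv_e]
  mul_ldiv a b := by
    show S.rdiv a (S.rinv (S.linv (S.ldiv b a))) = b
    rw [S.rinv_linv]
    have h := S.mul_rdiv (S.ldiv b a) b
    rw [S.mul_ldiv] at h
    exact h
  ldiv_mul a b := by
    show S.linv (S.ldiv (S.rdiv a (S.rinv b)) a) = b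
    have h := S.ldiv_mul (S.rdiv a (S.rinv b)) (S.rinv b)
    rw [S.rdiv_mul] at h
    rw [h, S.linv_rinv]
  rdiv_mul a b := by
    show S.rdiv (S.mul b (S.rinv a)) (S.rinv a) = b
    exact S.mul_rdiv (S.rinv a) b
  mul_rdiv a b := by
    show S.mul (S.rdiv b (S.rinv a)) (S.rinv a) = b
    exact S.rdiv_mul (S.rinv a) b

end LoopStr

namespace LoopStr

variable {Q : Type*} (S : LoopStr Q)

lemma mul_left_cancel {a b c : Q} (h : S.mul a b = S.mul a c) : b = c := by
  rw [← S.ldiv_mul a b, h, S.ldiv_mul]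

lemma mul_right_cancel {a b c : Q} (h : S.mul b a = S.mul c a) : b = c := by
  rw [← S.mul_rdiv a b, h, S.mul_rdiv]

/-- The opposite loop, with multiplication `x ∘ y = y · x`. -/
def opp : LoopStr Q where
  mul x y := S.mul y x
  e := S.e
  ldiv a b := S.rdiv b a
  rdiv b a := S.ldiv a b
  one_mul := S.mul_one
  mul_one := S.one_mul
  mul_ldiv := S.rdiv_mul
  ldiv_mul := S.mul_rdiv
  rdiv_mul := S.mul_ldiv
  mul_rdiv := S.ldiv_mul

lemma rnuc_subset_lnuc_opp : S.rnuc ⊆ S.opp.lnuc := fun _ ha x y => (ha y x).symm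

lemma mnuc_subset_mnuc_opp : S.mnuc ⊆ S.opp.mnuc := fun _ ha x y => (ha y x).symm

variable {S}

lemma IsSubloop.of_opp {N : Set Q} (h : S.opp.IsSubloop N) : S.IsSubloop N :=
  ⟨h.1, fun a ha b hb => h.2.1 b hb a ha, fun a ha b hb => h.2.2.2 b hb a ha,
    fun a ha b hb => h.2.2.1 b hb a ha⟩

lemma IsNormalSubloop.of_opp {N : Set Q} (h : S.opp.IsNormalSubloop N) :
    S.IsNormalSubloop N := by
  obtain ⟨hsub, hcomm, hmid, hassoc⟩ := h
  have hcomm' (x : Q) : (fun a => S.mul x a) '' N = (fun a => S.mul a x) '' N := (hcomm x).symm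
  have hmid' (x y : Q) :
      (fun a => S.mul (S.mul x a) y) '' N = (fun a => S.mul x (S.mul a y)) '' N :=
    (hmid y x).symm
  have hassoc' (x y : Q) :
      (fun a => S.mul (S.mul x y) a) '' N = (fun a => S.mul x (S.mul y a)) '' N :=
    hassoc y x
  refine ⟨hsub.of_opp, hcomm', hmid', fun x y => ?_⟩
  have hleft := congrArg (Set.image fun b => S.mul x b) (hcomm' y)
  have hright := congrArg (Set.image fun b => S.mul b y) (hcomm' x)
  simp only [Set.image_image] at hleft hright
  rw [← hcomm', hassoc', hleft, ← hmid', hright]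

lemma IsSimple.opp (h : S.IsSimple) : S.opp.IsSimple := fun N hN => h N hN.of_opp

/-- A multiplicatively closed set whose elements have inverses cancelling on both sides is a
subloop. -/
lemma isSubloop_of_inverse {N : Set Q} (he : S.e ∈ N)
    (hmul : ∀ a ∈ N, ∀ b ∈ N, S.mul a b ∈ N)
    (hinv : ∀ a ∈ N, ∃ r ∈ N, ∀ b ∈ N,
      S.mul a (S.mul r b) = b ∧ S.mul (S.mul b r) a = b) : S.IsSubloop N := by
  refine ⟨he, hmul, fun a ha b hb => ?_, fun b hb a ha => ?_⟩ <;>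
    obtain ⟨r, hr, hrb⟩ := hinv a ha
  · have : S.ldiv a b = S.mul r b := S.mul_left_cancel (by rw [S.mul_ldiv, (hrb b hb).1])
    exact this ▸ hmul r hr b hb
  · have : S.rdiv b a = S.mul b r := S.mul_right_cancel (by rw [S.rdiv_mul, (hrb b hb).2])
    exact this ▸ hmul b hb r hr

variable (S)

lemma isSubloop_lnuc : S.IsSubloop S.lnuc := by
  refine isSubloop_of_inverse (fun x y => by simp only [S.one_mul])
    (fun a ha b hb x y => by rw [ha, ha, hb, ha]) fun a ha => ?_
  have hcancel (x : Q) : S.mul a (S.mul (S.rinv a) x) = x := by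
    rw [← ha, S.mul_rinv, S.one_mul]
  have hr : S.rinv a ∈ S.lnuc := fun x y =>
    S.mul_left_cancel (a := a) (by rw [← ha, hcancel, hcancel])
  have hinv : S.mul (S.rinv a) a = S.e :=
    S.mul_left_cancel (a := a) (by rw [hcancel, S.mul_one])
  exact ⟨S.rinv a, hr, fun b hb => ⟨hcancel b, by rw [hb, hinv, S.mul_one]⟩⟩

lemma isSubloop_mnuc : S.IsSubloop S.mnuc := by
  refine isSubloop_of_inverse (fun x y => by rw [S.mul_one, S.one_mul])
    (fun a ha b hb x y => by rw [← ha, hb, ha, ← hb]) fun a ha => ?_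
  have hright (x : Q) : S.mul (S.mul x (S.rinv a)) a = x := by
    have h := ha (S.rdiv x a) (S.rinv a)
    rw [S.rdiv_mul, S.mul_rinv, S.mul_one] at h
    rw [h, S.rdiv_mul]
  have hinv : S.mul (S.rinv a) a = S.e := by
    simpa only [S.one_mul] using hright S.e
  have hleft (x : Q) : S.mul a (S.mul (S.rinv a) x) = x := by
    have h := ha (S.rinv a) (S.ldiv a x)
    rw [S.mul_ldiv, hinv, S.one_mul] at h
    rw [← h, S.mul_ldiv]
  refine ⟨S.rinv a, fun x y => ?_, fun b _ => ⟨hleft b, hright b⟩⟩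
  have h := ha (S.mul x (S.rinv a)) (S.mul (S.rinv a) y)
  rwa [hright, hleft, eq_comm] at h

lemma isSubloop_rnuc : S.IsSubloop S.rnuc := by
  have h : S.rnuc = S.opp.lnuc :=
    S.rnuc_subset_lnuc_opp.antisymm fun _ ha x y => (ha y x).symm
  exact h ▸ S.opp.isSubloop_lnuc.of_opp

variable {S} in
lemma IsSubloop.inter {M N : Set Q} (hM : S.IsSubloop M) (hN : S.IsSubloop N) :
    S.IsSubloop (M ∩ N) :=
  ⟨⟨hM.1, hN.1⟩,
    fun a ha b hb => ⟨hM.2.1 a ha.1 b hb.1, hN.2.1 a ha.2 b hb.2⟩,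
    fun a ha b hb => ⟨hM.2.2.1 a ha.1 b hb.1, hN.2.2.1 a ha.2 b hb.2⟩,
    fun a ha b hb => ⟨hM.2.2.2 a ha.1 b hb.1, hN.2.2.2 a ha.2 b hb.2⟩⟩

/-- The subloop generated by all squares. -/
def squareSubloop : Set Q :=
  {a | ∀ K : Set Q, S.IsSubloop K → (∀ x, S.mul x x ∈ K) → a ∈ K}

lemma isSubloop_squareSubloop : S.IsSubloop S.squareSubloop :=
  ⟨fun _ hK _ => hK.1,
    fun a ha b hb K hK hsq => hK.2.1 a (ha K hK hsq) b (hb K hK hsq),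
    fun a ha b hb K hK hsq => hK.2.2.1 a (ha K hK hsq) b (hb K hK hsq),
    fun a ha b hb K hK hsq => hK.2.2.2 a (ha K hK hsq) b (hb K hK hsq)⟩

lemma mul_self_mem_squareSubloop (x : Q) : S.mul x x ∈ S.squareSubloop :=
  fun _ _ hsq => hsq x

variable {S}

lemma image_mul_left_eq_image_mul_right {N : Set Q} {x : Q}
    (hlr : ∀ n ∈ N, ∃ k ∈ N, S.mul x n = S.mul k x)
    (hrl : ∀ n ∈ N, ∃ k ∈ N, S.mul n x = S.mul x k) :
    (fun a => S.mul x a) '' N = (fun a => S.mul a x) '' N := by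
  apply Set.Subset.antisymm
  · rintro _ ⟨n, hn, rfl⟩
    obtain ⟨k, hk, h⟩ := hlr n hn
    exact ⟨k, hk, h.symm⟩
  · rintro _ ⟨n, hn, rfl⟩
    obtain ⟨k, hk, h⟩ := hrl n hn
    exact ⟨k, hk, h.symm⟩

/-- If `(x n) x` lies in a left nuclear subloop `N` containing `x x`, then `x n ∈ N x`. -/
lemma IsSubloop.exists_mul_eq_mul_right {N : Set Q} (hN : S.IsSubloop N) (hl : N ⊆ S.lnuc)
    {x n : Q} (hx : S.mul x x ∈ N) (h : S.mul (S.mul x n) x ∈ N) :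
    ∃ k ∈ N, S.mul x n = S.mul k x := by
  have hk := hN.2.2.2 _ h _ hx
  exact ⟨_, hk, S.mul_right_cancel (a := x) (by rw [hl hk, S.rdiv_mul])⟩

/-- If `x (n x)` lies in a right nuclear subloop `N` containing `x x`, then `n x ∈ x N`. -/
lemma IsSubloop.exists_mul_eq_mul_left {N : Set Q} (hN : S.IsSubloop N) (hr : N ⊆ S.rnuc)
    {x n : Q} (hx : S.mul x x ∈ N) (h : S.mul x (S.mul n x) ∈ N) :
    ∃ k ∈ N, S.mul n x = S.mul x k := by
  have hk := hN.2.2.1 _ hx _ h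
  exact ⟨_, hk, S.mul_left_cancel (a := x) (by rw [← hr hk, S.mul_ldiv])⟩

lemma IsSubloop.mul_mul_self_mem {N : Set Q} (hN : S.IsSubloop N) (hl : N ⊆ S.lnuc)
    (hsq : ∀ x, S.mul x x ∈ N) (x : Q) {n : Q} (hn : n ∈ N) : S.mul x (S.mul n x) ∈ N := by
  have h := hN.2.2.1 n hn _ (hsq (S.mul n x))
  rwa [hl hn, S.ldiv_mul] at h

lemma IsSubloop.isNormalSubloop_of_lnuc_mnuc {N : Set Q} (hN : S.IsSubloop N)
    (hl : N ⊆ S.lnuc) (hm : N ⊆ S.mnuc) (hsq : ∀ x, S.mul x x ∈ N) :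
    S.IsNormalSubloop N := by
  refine ⟨hN, fun x => image_mul_left_eq_image_mul_right (fun n hn => ?_) (fun n hn => ?_),
    fun x y => Set.image_congr fun n hn => hm hn x y,
    fun x y => Set.image_congr fun n hn => (hl hn x y).symm⟩
  · refine hN.exists_mul_eq_mul_right hl (hsq x) ?_
    rw [hm hn]
    exact hN.mul_mul_self_mem hl hsq x hn
  · set m := S.mul n (S.mul x x)
    set z := S.ldiv x m
    have hxz : S.mul x z = m := S.mul_ldiv x m
    have hk := hN.2.2.2 _ (hsq z) m (hN.2.1 n hn _ (hsq x))
    have hkx : S.mul (S.rdiv (S.mul z z) m) x = z :=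
      S.mul_right_cancel (a := z) (by rw [hl hk, hxz, S.rdiv_mul])
    exact ⟨_, hk, S.mul_right_cancel (a := x) (by rw [hm hk, hkx, hxz, hl hn])⟩

lemma IsSubloop.isNormalSubloop_of_lnuc_rnuc {N : Set Q} (hN : S.IsSubloop N)
    (hl : N ⊆ S.lnuc) (hr : N ⊆ S.rnuc) (hsq : ∀ x, S.mul x x ∈ N) :
    S.IsNormalSubloop N := by
  have hcomm (x : Q) : (fun a => S.mul x a) '' N = (fun a => S.mul a x) '' N := by
    refine image_mul_left_eq_image_mul_right (fun n hn => ?_) (fun n hn => ?_)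
    · have h := hN.2.2.2 _ (hsq (S.mul x n)) n hn
      rw [← hr hn, S.mul_rdiv] at h
      exact hN.exists_mul_eq_mul_right hl (hsq x) h
    · exact hN.exists_mul_eq_mul_left hr (hsq x) (hN.mul_mul_self_mem hl hsq x hn)
  have hleft (x y : Q) :
      (fun a => S.mul a (S.mul x y)) '' N = (fun a => S.mul (S.mul a x) y) '' N :=
    Set.image_congr fun n hn => (hl hn x y).symm
  have hright (x y : Q) :
      (fun a => S.mul (S.mul x y) a) '' N = (fun a => S.mul x (S.mul y a)) '' N :=
    Set.image_congr fun n hn => hr hn x y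
  refine ⟨hN, hcomm, fun x y => ?_, hleft⟩
  have hx := congrArg (Set.image fun b => S.mul b y) (hcomm x)
  have hy := congrArg (Set.image fun b => S.mul x b) (hcomm y)
  simp only [Set.image_image] at hx hy
  rw [hx, ← hleft, ← hcomm, hright, hy]

/-- A normal subloop of a simple loop containing all squares is everything, unless the loop has
exponent two. -/
lemma IsSimple.eq_univ_or_mul_self_eq (h : S.IsSimple) {N : Set Q} (hN : S.IsNormalSubloop N)
    (hsq : ∀ x, S.mul x x ∈ N) : N = Set.univ ∨ ∀ x, S.mul x x = S.e :=
  (h N hN).symm.imp_right fun hNe x => by simpa [hNe] using hsq x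

lemma IsSimple.assoc_or_mul_self_eq_of_lnuc_mnuc (h : S.IsSimple)
    (hsq : ∀ x, S.mul x x ∈ S.lnuc ∩ S.mnuc) :
    (∀ x y z : Q, S.mul (S.mul x y) z = S.mul x (S.mul y z)) ∨
      (∀ x : Q, S.mul x x = S.e) := by
  have hsub : S.squareSubloop ⊆ S.lnuc ∩ S.mnuc :=
    fun a ha => ha _ (S.isSubloop_lnuc.inter S.isSubloop_mnuc) hsq
  have hN := S.isSubloop_squareSubloop.isNormalSubloop_of_lnuc_mnuc
    (fun _ ha => (hsub ha).1) (fun _ ha => (hsub ha).2) S.mul_self_mem_squareSubloop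
  exact (h.eq_univ_or_mul_self_eq hN S.mul_self_mem_squareSubloop).imp_left
    fun hu x => (hsub (hu ▸ Set.mem_univ x)).1

lemma IsSimple.assoc_or_mul_self_eq_of_lnuc_rnuc (h : S.IsSimple)
    (hsq : ∀ x, S.mul x x ∈ S.lnuc ∩ S.rnuc) :
    (∀ x y z : Q, S.mul (S.mul x y) z = S.mul x (S.mul y z)) ∨
      (∀ x : Q, S.mul x x = S.e) := by
  have hsub : S.squareSubloop ⊆ S.lnuc ∩ S.rnuc :=
    fun a ha => ha _ (S.isSubloop_lnuc.inter S.isSubloop_rnuc) hsq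
  have hN := S.isSubloop_squareSubloop.isNormalSubloop_of_lnuc_rnuc
    (fun _ ha => (hsub ha).1) (fun _ ha => (hsub ha).2) S.mul_self_mem_squareSubloop
  exact (h.eq_univ_or_mul_self_eq hN S.mul_self_mem_squareSubloop).imp_left
    fun hu x => (hsub (hu ▸ Set.mem_univ x)).1

end LoopStr

/-- A simple loop with all squares in (at least) two of the three
nuclei is either a group or has exponent two. -/
theorem simple_two_nuclei {Q : Type*} (S : LoopStr Q)
    (hSimple : S.IsSimple)
    (hsq : (∀ x : Q, S.mul x x ∈ S.lnuc ∩ S.mnuc) ∨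
           (∀ x : Q, S.mul x x ∈ S.lnuc ∩ S.rnuc) ∨
           (∀ x : Q, S.mul x x ∈ S.mnuc ∩ S.rnuc)) :
    (∀ x y z : Q, S.mul (S.mul x y) z = S.mul x (S.mul y z)) ∨
    (∀ x : Q, S.mul x x = S.e) := by
  rcases hsq with hsq | hsq | hsq
  · exact hSimple.assoc_or_mul_self_eq_of_lnuc_mnuc hsq
  · exact hSimple.assoc_or_mul_self_eq_of_lnuc_rnuc hsq
  · exact (hSimple.opp.assoc_or_mul_self_eq_of_lnuc_mnuc fun x =>
      ⟨S.rnuc_subset_lnuc_opp (hsq x).2, S.mnuc_subset_mnuc_opp (hsq x).1⟩).imp_left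
        fun hassoc x y z => (hassoc z y x).symm
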